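/- arXiv:2005.14046 — 2 statements merged into one kernel-verified Lean document; each statement's English description precedes it below -/
import Mathlib

section
/- Let n ≥ 2 and q ∈ (1,∞). For every x ∈ Bⁿ, ∫_{S^{n−1}} P_h(x,ζ)^q dσ(ζ) = (1−|x|²)^{−(n−1)(q−1)} · ∫_{S^{n−1}} |x−η|^{2(n−1)(q−1)} dσ(η), where P_h(x,ζ) = ((1−|x|²)/|x−ζ|²)^{n−1}. -/
open MeasureTheory Real

noncomputable def hyp (a b c x : ℝ) : ℝ :=
  ∑' k : ℕ, ((ascPochhammer ℝ k).eval a * (ascPochhammer ℝ k).eval b /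
    ((k.factorial : ℝ) * (ascPochhammer ℝ k).eval c)) * x ^ k


noncomputable def sphereσ (n : ℕ) : Measure (EuclideanSpace ℝ (Fin n)) :=
  (((μH[(n : ℝ) - 1]).restrict (Metric.sphere 0 1)) Set.univ)⁻¹ •
    (μH[(n : ℝ) - 1]).restrict (Metric.sphere 0 1)

open scoped NNReal ENNReal

/-!
The conformal factor of the involution `T_x` is `K(y) = |1 - |x|²| / |x - y|²`, that is,
`|T_x y - T_x z|² = K(y) K(z) |y - z|²`. A map with this property multiplies `d`-dimensional
Hausdorff measure by the density `K ^ d`: on a piece where `K` is nearly constant, the map and its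
inverse are Lipschitz with nearly inverse constants. Since `T_x` preserves the sphere and
`K(T_x η) = K(η)⁻¹`, the change of variables `ζ = T_x η` gives `∫ K ^ s dσ = ∫ K ^ (n - 1 - s) dσ`
for every real `s`, and `s = (n - 1) q` is the claim.
-/

section WithDensity

variable {X : Type*} [MeasurableSpace X] {μ ν : Measure X} {g : X → ℝ≥0}

theorem mul_measure_le_withDensity {A : Set X} (hA : MeasurableSet A)
    {a : ℝ≥0∞} (ha : ∀ y ∈ A, a ≤ g y) : a * μ A ≤ μ.withDensity (fun y ↦ (g y : ℝ≥0∞)) A := by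
  rw [withDensity_apply _ hA, ← setLIntegral_const]
  exact setLIntegral_mono' hA ha

theorem le_mul_withDensity_of_forall_le_mul (hg : Measurable g)
    (h : ∀ A, MeasurableSet A → ∀ c : ℝ≥0, (∀ y ∈ A, g y ≤ c) → ν A ≤ c * μ A)
    {t : ℝ≥0} (ht : 1 < t) {E : Set X} (hE : MeasurableSet E) :
    ν E ≤ t * μ.withDensity (fun y ↦ (g y : ℝ≥0∞)) E := by
  have ht₀ : t ≠ 0 := (zero_lt_one.trans ht).ne'
  have hg' : Measurable fun y ↦ (g y : ℝ≥0∞) := hg.coe_nnreal_ennreal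
  -- On each of the level sets `t ^ k ≤ g < t ^ (k + 1)`, `g` is constant up to a factor `t`.
  have h_top : (fun y ↦ (g y : ℝ≥0∞)) ⁻¹' {∞} = ∅ := by ext; simp
  rw [measure_eq_measure_preimage_add_measure_tsum_Ico_zpow ν hg' hE ht,
    measure_eq_measure_preimage_add_measure_tsum_Ico_zpow (μ.withDensity _) hg' hE ht,
    mul_add, mul_add, ← ENNReal.tsum_mul_left, h_top]
  gcongr with k
  · calc ν (E ∩ (fun y ↦ (g y : ℝ≥0∞)) ⁻¹' {0})
        ≤ (0 : ℝ≥0) * μ (E ∩ (fun y ↦ (g y : ℝ≥0∞)) ⁻¹' {0}) :=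
          h _ (hE.inter (hg' (measurableSet_singleton 0))) 0 fun y hy ↦ by simpa using hy.2
      _ ≤ _ := by simp
  · simp
  · set A := E ∩ (fun y ↦ (g y : ℝ≥0∞)) ⁻¹' Set.Ico ((t : ℝ≥0∞) ^ k) ((t : ℝ≥0∞) ^ (k + 1))
    have hA : MeasurableSet A := hE.inter (hg' measurableSet_Ico)
    have hA_le : ∀ y ∈ A, g y ≤ t ^ (k + 1) := fun y hy ↦ by
      have := hy.2.2.le
      rwa [← ENNReal.coe_zpow ht₀, ENNReal.coe_le_coe] at this
    calc ν A ≤ (t ^ (k + 1) : ℝ≥0) * μ A := h A hA _ hA_le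
      _ = t * ((t : ℝ≥0∞) ^ k * μ A) := by
        rw [zpow_add_one₀ ht₀, ENNReal.coe_mul, ENNReal.coe_zpow ht₀, mul_comm _ (t : ℝ≥0∞),
          mul_assoc]
      _ ≤ t * μ.withDensity (fun y ↦ (g y : ℝ≥0∞)) A := by
        gcongr
        exact mul_measure_le_withDensity hA fun y hy ↦ hy.2.1

theorem le_withDensity_of_forall_le_mul (hg : Measurable g)
    (h : ∀ A, MeasurableSet A → ∀ c : ℝ≥0, (∀ y ∈ A, g y ≤ c) → ν A ≤ c * μ A) :
    ν ≤ μ.withDensity fun y ↦ (g y : ℝ≥0∞) := by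
  refine Measure.le_intro fun E hE _ ↦ ?_
  set a := μ.withDensity (fun y ↦ (g y : ℝ≥0∞)) E
  have hlim : Filter.Tendsto (fun t : ℝ≥0 ↦ (t : ℝ≥0∞) * a) (nhdsWithin 1 (Set.Ioi 1))
      (nhds (1 * a)) :=
    (ENNReal.Tendsto.mul_const (ENNReal.continuous_coe.tendsto 1)
      (Or.inl (by simp))).mono_left nhdsWithin_le_nhds
  rw [← one_mul a]
  exact ge_of_tendsto hlim <| Filter.eventually_of_mem self_mem_nhdsWithin fun t ht ↦
    le_mul_withDensity_of_forall_le_mul hg h ht hE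

theorem eq_withDensity_of_forall_le_mul (hg : Measurable g) (hg₀ : ∀ᵐ y ∂ν, g y ≠ 0)
    (h : ∀ A, MeasurableSet A → ∀ c : ℝ≥0, (∀ y ∈ A, g y ≤ c) → ν A ≤ c * μ A)
    (h' : ∀ A, MeasurableSet A → ∀ c : ℝ≥0, (∀ y ∈ A, (g y)⁻¹ ≤ c) → μ A ≤ c * ν A) :
    ν = μ.withDensity fun y ↦ (g y : ℝ≥0∞) := by
  refine le_antisymm (le_withDensity_of_forall_le_mul hg h) ?_
  have hμ : μ ≤ ν.withDensity fun y ↦ ((g y)⁻¹ : ℝ≥0) :=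
    le_withDensity_of_forall_le_mul hg.inv h'
  have hν : (ν.withDensity fun y ↦ ((g y)⁻¹ : ℝ≥0)).withDensity (fun y ↦ (g y : ℝ≥0∞)) = ν := by
    rw [← withDensity_mul _ hg.fun_inv.coe_nnreal_ennreal hg.coe_nnreal_ennreal]
    nth_rw 2 [← withDensity_one (μ := ν)]
    refine withDensity_congr_ae (hg₀.mono fun y hy ↦ ?_)
    simp [hy, ENNReal.inv_mul_cancel]
  refine Measure.le_intro fun A hA _ ↦ ?_
  rw [← hν, withDensity_apply _ hA, withDensity_apply _ hA]
  exact lintegral_mono' (Measure.restrict_mono_measure hμ A) le_rfl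

end WithDensity

/-- `f` is a Möbius map on `S` with conformal factor `h`: the metric form
`|f y - f z|² = h(y) h(z) |y - z|²` of the identity satisfied by compositions of inversions, where
`h` is the linear dilation `|f'|`. As `h ≠ 0`, the inverse of `f` is a Möbius map with factor
`1 / h`. -/
structure IsMobiusOn {X Y : Type*} [PseudoMetricSpace X] [PseudoMetricSpace Y]
    (f : X → Y) (h : X → ℝ≥0) (S : Set X) : Prop where
  factor_ne_zero : ∀ y ∈ S, h y ≠ 0
  nndist_sq : ∀ y ∈ S, ∀ z ∈ S, nndist (f y) (f z) ^ 2 = h y * h z * nndist y z ^ 2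

namespace IsMobiusOn

section Metric

variable {X Y : Type*} [PseudoMetricSpace X] [PseudoMetricSpace Y] {f : X → Y} {h : X → ℝ≥0}
  {S A : Set X} {c : ℝ≥0}

theorem mono (hf : IsMobiusOn f h S) (hA : A ⊆ S) : IsMobiusOn f h A :=
  ⟨fun y hy ↦ hf.factor_ne_zero y (hA hy), fun y hy z hz ↦ hf.nndist_sq y (hA hy) z (hA hz)⟩

theorem lipschitzOnWith (hf : IsMobiusOn f h A) (hc : ∀ y ∈ A, h y ≤ c) :
    LipschitzOnWith c f A := by
  refine LipschitzOnWith.of_dist_le_mul fun y hy z hz ↦ ?_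
  suffices nndist (f y) (f z) ≤ c * nndist y z by exact_mod_cast this
  refine (pow_le_pow_iff_left₀ zero_le zero_le two_ne_zero).1 ?_
  calc nndist (f y) (f z) ^ 2 = h y * h z * nndist y z ^ 2 := hf.nndist_sq y hy z hz
    _ ≤ c * c * nndist y z ^ 2 := by gcongr <;> exact hc _ ‹_›
    _ = (c * nndist y z) ^ 2 := by ring

theorem symm {f : X ≃ Y} (hf : IsMobiusOn f h S) :
    IsMobiusOn f.symm (fun z ↦ (h (f.symm z))⁻¹) (f '' S) where
  factor_ne_zero := by
    rintro _ ⟨y, hy, rfl⟩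
    simpa using hf.factor_ne_zero y hy
  nndist_sq := by
    rintro _ ⟨y, hy, rfl⟩ _ ⟨z, hz, rfl⟩
    have hy₀ := hf.factor_ne_zero y hy
    have hz₀ := hf.factor_ne_zero z hz
    simp only [Equiv.symm_apply_apply, hf.nndist_sq y hy z hz]
    field_simp

end Metric

variable {X Y : Type*} [MetricSpace X] [MeasurableSpace X] [BorelSpace X]
  [MetricSpace Y] [MeasurableSpace Y] [BorelSpace Y] {h : X → ℝ≥0} {S A : Set X} {d : ℝ}

theorem hausdorffMeasure_image_le {f : X → Y} (hf : IsMobiusOn f h A) (hd : 0 < d) {c : ℝ≥0}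
    (hc : ∀ y ∈ A, h y ^ d ≤ c) : μH[d] (f '' A) ≤ c * μH[d] A := by
  have hlip : LipschitzOnWith (c ^ d⁻¹) f A :=
    hf.lipschitzOnWith fun y hy ↦ (NNReal.le_rpow_inv_iff hd).2 (hc y hy)
  convert hlip.hausdorffMeasure_image_le hd.le using 2
  rw [← ENNReal.coe_rpow_of_nonneg _ hd.le, NNReal.rpow_inv_rpow hd.ne']

theorem hausdorffMeasure_le_image {f : X ≃ Y} (hf : IsMobiusOn f h A) (hd : 0 < d) {c : ℝ≥0}
    (hc : ∀ y ∈ A, (h y ^ d)⁻¹ ≤ c) : μH[d] A ≤ c * μH[d] (f '' A) := by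
  have := hf.symm.hausdorffMeasure_image_le hd (c := c)
    (by rintro _ ⟨y, hy, rfl⟩; simpa [NNReal.inv_rpow] using hc y hy)
  rwa [f.symm_image_image] at this

theorem map_symm_hausdorffMeasure_restrict {f : X ≃ᵐ Y} (hf : IsMobiusOn f h S)
    (hh : Measurable h) (hS : MeasurableSet S) (hd : 0 < d) :
    (μH[d].map f.symm).restrict S =
      ((μH[d]).restrict S).withDensity fun y ↦ ((h y ^ d : ℝ≥0) : ℝ≥0∞) := by
  have restrict_apply {A : Set X} (hA : MeasurableSet A) :
      (μH[d].map f.symm).restrict S A = μH[d] (f '' (A ∩ S)) := by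
    rw [Measure.restrict_apply hA, f.symm.map_apply, f.image_eq_preimage_symm]
  refine eq_withDensity_of_forall_le_mul (hh.pow_const d) ?_ ?_ ?_
  · exact (ae_restrict_iff' hS).2 <| .of_forall fun y hy ↦ by
      simp [NNReal.rpow_eq_zero_iff, hf.factor_ne_zero y hy]
  · intro A hA c hc
    rw [restrict_apply hA, Measure.restrict_apply hA]
    exact (hf.mono Set.inter_subset_right).hausdorffMeasure_image_le hd fun y hy ↦ hc y hy.1
  · intro A hA c hc
    rw [restrict_apply hA, Measure.restrict_apply hA]
    exact (hf.mono Set.inter_subset_right).hausdorffMeasure_le_image (f := f.toEquiv) hd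
      fun y hy ↦ hc y hy.1

theorem setIntegral_image {f : X ≃ᵐ Y} (hf : IsMobiusOn f h S)
    (hh : Measurable h) (hS : MeasurableSet S) (hd : 0 < d)
    {G : Type*} [NormedAddCommGroup G] [NormedSpace ℝ G] (F : Y → G) :
    ∫ z in f '' S, F z ∂μH[d] = ∫ y in S, h y ^ d • F (f y) ∂μH[d] := by
  calc ∫ z in f '' S, F z ∂μH[d] = ∫ z in f '' S, F z ∂(μH[d].map f.symm).map f := by
        rw [f.map_map_symm]
    _ = ∫ y in S, F (f y) ∂μH[d].map f.symm := by
        rw [setIntegral_map_equiv, f.preimage_image]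
    _ = ∫ y in S, h y ^ d • F (f y) ∂μH[d] := by
        rw [hf.map_symm_hausdorffMeasure_restrict hh hS hd,
          integral_withDensity_eq_integral_smul (hh.pow_const d)]

end IsMobiusOn

section SphereInvolution

/-- The linear conformal factor `|1 - |x|²| / |x - y|²` of the involution `sphereInvolution x`; for
`|x| < 1` the Poisson–Szegő kernel `P_h(x, ·)` of `ℝⁿ` is its `(n - 1)`-st power. -/
noncomputable def poissonFactor {E : Type*} [NormedAddCommGroup E] (x y : E) : ℝ≥0 :=
  ‖1 - ‖x‖ ^ 2‖₊ / ‖x - y‖₊ ^ 2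

/-- The map `T_x(y) = x - (1 - |x|²)(y - x) / |y - x|²`, exchanging the two points in which a line
through `x` meets the unit sphere. By the convention `a / 0 = 0` it fixes `x`, so that for `|x| ≠ 1`
it is an involution of the whole space. -/
noncomputable def sphereInvolution {E : Type*} [NormedAddCommGroup E] [NormedSpace ℝ E]
    (x y : E) : E :=
  x - ((1 - ‖x‖ ^ 2) / ‖x - y‖ ^ 2) • (y - x)

section Norm

variable {E : Type*} [NormedAddCommGroup E] {x y : E}

theorem one_sub_norm_sq_ne_zero (hx : ‖x‖ ≠ 1) : 1 - ‖x‖ ^ 2 ≠ 0 :=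
  sub_ne_zero.2 fun h ↦ hx ((pow_eq_one_iff_of_nonneg (norm_nonneg x) two_ne_zero).1 h.symm)

theorem sphere_subset_compl_singleton (hx : ‖x‖ ≠ 1) : Metric.sphere (0 : E) 1 ⊆ {x}ᶜ :=
  Set.subset_compl_singleton_iff.2 (by simpa using hx)

theorem coe_poissonFactor (x y : E) :
    (poissonFactor x y : ℝ) = |1 - ‖x‖ ^ 2| / ‖x - y‖ ^ 2 := by
  simp [poissonFactor]

theorem poissonFactor_ne_zero (hx : ‖x‖ ≠ 1) (hy : y ≠ x) : poissonFactor x y ≠ 0 := by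
  simp [poissonFactor, one_sub_norm_sq_ne_zero hx, sub_eq_zero, hy.symm]

theorem poissonFactor_rpow (x y : E) (s : ℝ) :
    (poissonFactor x y : ℝ) ^ s = |1 - ‖x‖ ^ 2| ^ s * ‖x - y‖ ^ (-(2 * s)) := by
  rw [coe_poissonFactor, div_rpow (abs_nonneg _) (sq_nonneg _), ← rpow_natCast ‖x - y‖ 2,
    ← rpow_mul (norm_nonneg _), rpow_neg (norm_nonneg _), Nat.cast_ofNat, div_eq_mul_inv]

theorem measurable_poissonFactor [MeasurableSpace E] [BorelSpace E] (x : E) :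
    Measurable (poissonFactor x) := by
  unfold poissonFactor
  fun_prop

end Norm

section NormedSpace

variable {E : Type*} [NormedAddCommGroup E] [NormedSpace ℝ E] {x : E}

theorem sub_sphereInvolution (x y : E) :
    x - sphereInvolution x y = ((1 - ‖x‖ ^ 2) / ‖x - y‖ ^ 2) • (y - x) :=
  sub_sub_cancel _ _

theorem norm_sub_sphereInvolution (x y : E) :
    ‖x - sphereInvolution x y‖ = |1 - ‖x‖ ^ 2| / ‖x - y‖ := by
  rw [sub_sphereInvolution, norm_smul, norm_sub_rev y, norm_div, norm_pow, norm_norm,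
    Real.norm_eq_abs]
  rcases eq_or_ne ‖x - y‖ 0 with h | h
  · simp [h]
  · field_simp

theorem sphereInvolution_involutive (hx : ‖x‖ ≠ 1) :
    Function.Involutive (sphereInvolution x) := by
  intro y
  have hr := one_sub_norm_sq_ne_zero hx
  rcases eq_or_ne x y with rfl | hxy
  · simp [sphereInvolution]
  have hxy' : ‖x - y‖ ≠ 0 := norm_ne_zero_iff.2 (sub_ne_zero.2 hxy)
  have hscale : (1 - ‖x‖ ^ 2) / (|1 - ‖x‖ ^ 2| / ‖x - y‖) ^ 2 *
      ((1 - ‖x‖ ^ 2) / ‖x - y‖ ^ 2) = 1 := by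
    rw [div_pow, sq_abs]
    field_simp
  rw [sphereInvolution, norm_sub_sphereInvolution, ← neg_sub x, sub_sphereInvolution, smul_neg,
    smul_smul, hscale]
  module

theorem poissonFactor_sphereInvolution (hx : ‖x‖ ≠ 1) (y : E) :
    poissonFactor x (sphereInvolution x y) = (poissonFactor x y)⁻¹ := by
  have hr := abs_ne_zero.2 (one_sub_norm_sq_ne_zero hx)
  apply NNReal.coe_injective
  rw [NNReal.coe_inv, coe_poissonFactor, coe_poissonFactor, norm_sub_sphereInvolution, div_pow,
    inv_div, div_div_eq_mul_div, sq |1 - ‖x‖ ^ 2|]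
  exact mul_div_mul_left _ _ hr

theorem measurable_sphereInvolution [MeasurableSpace E] [BorelSpace E] (x : E) :
    Measurable (sphereInvolution x) := by
  refine measurable_of_continuousOn_compl_singleton x ?_
  unfold sphereInvolution
  fun_prop (disch := simp +contextual [sub_eq_zero, eq_comm])

end NormedSpace

section InnerProductSpace

variable {E : Type*} [NormedAddCommGroup E] [InnerProductSpace ℝ E] {x y z : E}

theorem norm_sphereInvolution (hy : ‖y‖ = 1) : ‖sphereInvolution x y‖ = 1 := by
  rcases eq_or_ne x y with rfl | hxy
  · simpa [sphereInvolution] using hy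
  have hxy' : ‖x - y‖ ≠ 0 := norm_ne_zero_iff.2 (sub_ne_zero.2 hxy)
  have hinner : inner ℝ x (y - x) = (1 - ‖x‖ ^ 2 - ‖x - y‖ ^ 2) / 2 := by
    have := norm_add_sq_real x (y - x)
    rw [add_sub_cancel, hy, norm_sub_rev y] at this
    linarith
  rw [← sq_eq_sq₀ (norm_nonneg _) zero_le_one, sphereInvolution, norm_sub_sq_real,
    inner_smul_right, hinner, norm_smul, mul_pow, norm_sub_rev y, Real.norm_eq_abs, sq_abs]
  field_simp
  ring

theorem sphereInvolution_image_sphere (hx : ‖x‖ ≠ 1) :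
    sphereInvolution x '' Metric.sphere 0 1 = Metric.sphere 0 1 := by
  have hinv := sphereInvolution_involutive hx
  have hmaps : Set.MapsTo (sphereInvolution x) (Metric.sphere 0 1) (Metric.sphere 0 1) :=
    fun y hy ↦ by simpa using norm_sphereInvolution (x := x) (by simpa using hy)
  exact hmaps.image_subset.antisymm fun y hy ↦ ⟨_, hmaps hy, hinv y⟩

theorem dist_sphereInvolution (hy : x ≠ y) (hz : x ≠ z) :
    dist (sphereInvolution x y) (sphereInvolution x z) =
      |1 - ‖x‖ ^ 2| / (‖x - y‖ * ‖x - z‖) * dist y z := by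
  have hdist := dist_div_norm_sq_smul (sub_ne_zero.2 hy) (sub_ne_zero.2 hz) 1
  have hform (w : E) :
      sphereInvolution x w = x + (1 - ‖x‖ ^ 2) • ((1 / ‖x - w‖) ^ 2 • (x - w)) := by
    rw [sphereInvolution, smul_smul, one_div_pow, mul_one_div, ← neg_sub x w, smul_neg,
      sub_neg_eq_add]
  rw [hform, hform, dist_add_left, dist_smul₀, hdist, dist_sub_left, Real.norm_eq_abs]
  ring

theorem isMobiusOn_sphereInvolution (hx : ‖x‖ ≠ 1) :
    IsMobiusOn (sphereInvolution x) (poissonFactor x) {x}ᶜ where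
  factor_ne_zero _ hy := poissonFactor_ne_zero hx hy
  nndist_sq y hy z hz := by
    apply NNReal.coe_injective
    push_cast
    rw [dist_sphereInvolution (Ne.symm hy) (Ne.symm hz), coe_poissonFactor, coe_poissonFactor]
    ring

variable [MeasurableSpace E] [BorelSpace E]

theorem setIntegral_sphere_eq_setIntegral_sphereInvolution (hx : ‖x‖ ≠ 1) {d : ℝ} (hd : 0 < d)
    {G : Type*} [NormedAddCommGroup G] [NormedSpace ℝ G] (F : E → G) :
    ∫ ζ in Metric.sphere 0 1, F ζ ∂μH[d] =
      ∫ η in Metric.sphere 0 1, poissonFactor x η ^ d • F (sphereInvolution x η) ∂μH[d] := by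
  let T : E ≃ᵐ E := .ofInvolutive _ (sphereInvolution_involutive hx) (measurable_sphereInvolution x)
  have hT : IsMobiusOn T (poissonFactor x) (Metric.sphere 0 1) :=
    (isMobiusOn_sphereInvolution hx).mono (sphere_subset_compl_singleton hx)
  calc ∫ ζ in Metric.sphere 0 1, F ζ ∂μH[d] = ∫ ζ in T '' Metric.sphere 0 1, F ζ ∂μH[d] := by
        rw [show T '' Metric.sphere 0 1 = Metric.sphere 0 1 from sphereInvolution_image_sphere hx]
    _ = _ := hT.setIntegral_image (measurable_poissonFactor x) Metric.isClosed_sphere.measurableSet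
        hd F

theorem setIntegral_sphere_poissonFactor_rpow (hx : ‖x‖ ≠ 1) {d : ℝ} (hd : 0 < d) (s : ℝ) :
    ∫ ζ in Metric.sphere 0 1, (poissonFactor x ζ : ℝ) ^ s ∂μH[d] =
      ∫ η in Metric.sphere 0 1, (poissonFactor x η : ℝ) ^ (d - s) ∂μH[d] := by
  rw [setIntegral_sphere_eq_setIntegral_sphereInvolution hx hd]
  refine setIntegral_congr_fun Metric.isClosed_sphere.measurableSet fun η hη ↦ ?_
  have hη₀ : 0 < (poissonFactor x η : ℝ) :=
    NNReal.coe_pos.2 (pos_iff_ne_zero.2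
      (poissonFactor_ne_zero hx (sphere_subset_compl_singleton hx hη)))
  simp only [poissonFactor_sphereInvolution hx]
  rw [NNReal.smul_def, smul_eq_mul, NNReal.coe_rpow, NNReal.coe_inv, inv_rpow hη₀.le,
    rpow_sub hη₀, div_eq_mul_inv]

end InnerProductSpace

end SphereInvolution

section SphereMeasure

variable {n : ℕ} {x : EuclideanSpace ℝ (Fin n)}

theorem integral_sphereσ_poissonFactor_rpow (hn : 2 ≤ n) (hx : ‖x‖ ≠ 1) (s : ℝ) :
    ∫ ζ, (poissonFactor x ζ : ℝ) ^ s ∂sphereσ n =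
      ∫ η, (poissonFactor x η : ℝ) ^ ((n : ℝ) - 1 - s) ∂sphereσ n := by
  have hd : (0 : ℝ) < n - 1 := sub_pos.2 (Nat.one_lt_cast.2 hn)
  rw [sphereσ, integral_smul_measure, integral_smul_measure,
    setIntegral_sphere_poissonFactor_rpow hx hd]

theorem poisson_szego_power_integral_general (hn : 2 ≤ n) (q : ℝ) (hx : ‖x‖ ≠ 1) :
    ∫ ζ, ((|1 - ‖x‖ ^ 2| / ‖x - ζ‖ ^ 2) ^ (n - 1) : ℝ) ^ q ∂(sphereσ n) =
      |1 - ‖x‖ ^ 2| ^ (-((n : ℝ) - 1) * (q - 1)) *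
        ∫ η, ‖x - η‖ ^ (2 * ((n : ℝ) - 1) * (q - 1)) ∂(sphereσ n) := by
  have hkernel (ζ : EuclideanSpace ℝ (Fin n)) :
      ((|1 - ‖x‖ ^ 2| / ‖x - ζ‖ ^ 2) ^ (n - 1)) ^ q =
        (poissonFactor x ζ : ℝ) ^ (((n : ℝ) - 1) * q) := by
    rw [← coe_poissonFactor, ← rpow_natCast, ← rpow_mul NNReal.zero_le_coe,
      Nat.cast_pred (by lia)]
  calc ∫ ζ, ((|1 - ‖x‖ ^ 2| / ‖x - ζ‖ ^ 2) ^ (n - 1)) ^ q ∂(sphereσ n)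
      = ∫ ζ, (poissonFactor x ζ : ℝ) ^ (((n : ℝ) - 1) * q) ∂sphereσ n := by simp only [hkernel]
    _ = ∫ η, (poissonFactor x η : ℝ) ^ ((n : ℝ) - 1 - ((n : ℝ) - 1) * q) ∂sphereσ n :=
        integral_sphereσ_poissonFactor_rpow hn hx _
    _ = ∫ η, |1 - ‖x‖ ^ 2| ^ (-((n : ℝ) - 1) * (q - 1)) *
          ‖x - η‖ ^ (2 * ((n : ℝ) - 1) * (q - 1)) ∂sphereσ n := by
        simp only [poissonFactor_rpow]
        ring_nf
    _ = _ := integral_const_mul _ _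

end SphereMeasure

theorem poisson_szego_power_integral (n : ℕ) (hn : 2 ≤ n) (q : ℝ) (hq : 1 < q)
    (x : EuclideanSpace ℝ (Fin n)) (hx : ‖x‖ < 1) :
    ∫ ζ, (((1 - ‖x‖ ^ 2) / ‖x - ζ‖ ^ 2) ^ (n - 1) : ℝ) ^ q ∂(sphereσ n) =
      (1 - ‖x‖ ^ 2) ^ (-((n : ℝ) - 1) * (q - 1)) *
        ∫ η, ‖x - η‖ ^ (2 * ((n : ℝ) - 1) * (q - 1)) ∂(sphereσ n) := by
  have hr : 0 < 1 - ‖x‖ ^ 2 := sub_pos.2 (pow_lt_one₀ (norm_nonneg x) hx two_ne_zero)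
  simpa only [abs_of_pos hr] using poisson_szego_power_integral_general hn q hx.ne
end

section
/- Suppose 2b is neither zero nor a negative integer, |x| < 1, and |4x/(1+x)²| < 1. Then ₂F₁(a, b; 2b; 4x/(1+x)²) = (1+x)^{2a} · ₂F₁(a, a − b + 1/2; b + 1/2; x²). -/
open MeasureTheory Real

/-!
In terms of Euler's operator `θ = x d/dx`, the function `f = ₂F₁ a b c` solves
`θ (θ + c - 1) f = x (θ + a) (θ + b) f`. Since `θ (x²) = 2 x²` and `φ x = 4 x / (1 + x)²` satisfies
`θ φ = (1 - x) / (1 + x) * φ`, both `₂F₁ a (a - b + 1/2) (b + 1/2) (x²)` and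
`(1 + x) ^ (-2a) * ₂F₁ a b (2b) (φ x)` solve the same second-order equation, whose exponents at `0`
are `0` and `1 - 2b`. As `1 - 2b` is not a positive integer, a solution that is analytic at `0` is
determined by its value there. The resulting identity near `0` extends to all `x` with `|x| < 1` and
`|φ x| < 1`, because these form a star-shaped domain.
-/

open Filter Topology

section EulerOperator

variable {𝕜 : Type*} [NontriviallyNormedField 𝕜] {A B C f g s t w φ : 𝕜 → 𝕜} {c x : 𝕜}

/-- Euler's operator `θ = x d/dx`. -/
noncomputable def eulerOp (f : 𝕜 → 𝕜) (x : 𝕜) : 𝕜 := x * deriv f x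

/-- The second-order operator `A θ² + B θ + C`, where `θ` is Euler's operator. With coefficients
that are continuous at `0` it has at worst a regular singular point there. -/
noncomputable def eulerDiffOp (A B C f : 𝕜 → 𝕜) (x : 𝕜) : 𝕜 :=
  A x * eulerOp (eulerOp f) x + B x * eulerOp f x + C x * f x

lemma eulerOp_eq_of_hasDerivAt {f' : 𝕜} (hf : HasDerivAt f f' x) : eulerOp f x = x * f' := by
  rw [eulerOp, hf.deriv]

lemma eulerOp_apply_zero (f : 𝕜 → 𝕜) : eulerOp f 0 = 0 := zero_mul _

lemma eulerOp_const (c x : 𝕜) : eulerOp (fun _ ↦ c) x = 0 := by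
  simp [eulerOp]

lemma eulerOp_pow (n : ℕ) (x : 𝕜) : eulerOp (fun y ↦ y ^ n) x = n * x ^ n := by
  cases n with
  | zero => simp [eulerOp]
  | succ n => simp only [eulerOp, deriv_pow_field, add_tsub_cancel_right]; ring

lemma eulerOp_add (hf : DifferentiableAt 𝕜 f x) (hg : DifferentiableAt 𝕜 g x) :
    eulerOp (fun y ↦ f y + g y) x = eulerOp f x + eulerOp g x := by
  simp only [eulerOp, deriv_fun_add hf hg, mul_add]

lemma eulerOp_sub (hf : DifferentiableAt 𝕜 f x) (hg : DifferentiableAt 𝕜 g x) :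
    eulerOp (fun y ↦ f y - g y) x = eulerOp f x - eulerOp g x := by
  simp only [eulerOp, deriv_fun_sub hf hg, mul_sub]

lemma eulerOp_mul (hf : DifferentiableAt 𝕜 f x) (hg : DifferentiableAt 𝕜 g x) :
    eulerOp (fun y ↦ f y * g y) x = eulerOp f x * g x + f x * eulerOp g x := by
  simp only [eulerOp, deriv_fun_mul hf hg]
  ring

lemma eulerOp_comp (hf : DifferentiableAt 𝕜 f (φ x)) (hφ : DifferentiableAt 𝕜 φ x)
    (hs : eulerOp φ x = c * φ x) : eulerOp (fun y ↦ f (φ y)) x = c * eulerOp f (φ x) := by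
  have chain : deriv (fun y ↦ f (φ y)) x = deriv f (φ x) * deriv φ x := deriv_comp x hf hφ
  simp only [eulerOp] at hs ⊢
  linear_combination x * chain + deriv f (φ x) * hs

lemma eventuallyEq_eulerOp (h : f =ᶠ[𝓝 x] g) : eulerOp f =ᶠ[𝓝 x] eulerOp g := by
  filter_upwards [h.deriv] with y hy
  rw [eulerOp, eulerOp, hy]

lemma eulerDiffOp_congr (h : f =ᶠ[𝓝 x] g) : eulerDiffOp A B C f x = eulerDiffOp A B C g x := by
  have hθ := eventuallyEq_eulerOp h
  simp only [eulerDiffOp, (eventuallyEq_eulerOp hθ).eq_of_nhds, hθ.eq_of_nhds, h.eq_of_nhds]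

variable [CompleteSpace 𝕜]

lemma analyticAt_eulerOp (hf : AnalyticAt 𝕜 f x) : AnalyticAt 𝕜 (eulerOp f) x :=
  analyticAt_id.mul hf.deriv

lemma eulerDiffOp_sub (hf : AnalyticAt 𝕜 f x) (hg : AnalyticAt 𝕜 g x) :
    eulerDiffOp A B C (fun y ↦ f y - g y) x = eulerDiffOp A B C f x - eulerDiffOp A B C g x := by
  have hθ : eulerOp (fun y ↦ f y - g y) =ᶠ[𝓝 x] fun y ↦ eulerOp f y - eulerOp g y := by
    filter_upwards [hf.eventually_analyticAt, hg.eventually_analyticAt] with y hfy hgy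
    exact eulerOp_sub hfy.differentiableAt hgy.differentiableAt
  have hθθ := (eventuallyEq_eulerOp hθ).eq_of_nhds.trans <|
    eulerOp_sub (analyticAt_eulerOp hf).differentiableAt (analyticAt_eulerOp hg).differentiableAt
  rw [eulerDiffOp, hθθ, hθ.eq_of_nhds, eulerDiffOp, eulerDiffOp]
  ring

lemma eulerDiffOp_mul (hw : AnalyticAt 𝕜 w x) (ht : AnalyticAt 𝕜 t x) (hf : AnalyticAt 𝕜 f x)
    (hwt : ∀ᶠ y in 𝓝 x, eulerOp w y = t y * w y) :
    eulerDiffOp A B C (fun y ↦ w y * f y) x =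
      w x * eulerDiffOp A (fun y ↦ 2 * t y * A y + B y)
        (fun y ↦ (t y ^ 2 + eulerOp t y) * A y + t y * B y + C y) f x := by
  have hθ : eulerOp (fun y ↦ w y * f y) =ᶠ[𝓝 x] fun y ↦ w y * (t y * f y + eulerOp f y) := by
    filter_upwards [hw.eventually_analyticAt, hf.eventually_analyticAt, hwt] with y hwy hfy hwty
    rw [eulerOp_mul hwy.differentiableAt hfy.differentiableAt, hwty]
    ring
  have hθθ : eulerOp (eulerOp fun y ↦ w y * f y) x =
      w x * ((t x ^ 2 + eulerOp t x) * f x + 2 * t x * eulerOp f x + eulerOp (eulerOp f) x) := by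
    have htf : AnalyticAt 𝕜 (fun y ↦ t y * f y) x := ht.mul hf
    rw [(eventuallyEq_eulerOp hθ).eq_of_nhds, eulerOp_mul hw.differentiableAt
      (htf.fun_add (analyticAt_eulerOp hf)).differentiableAt, eulerOp_add htf.differentiableAt
      (analyticAt_eulerOp hf).differentiableAt, eulerOp_mul ht.differentiableAt hf.differentiableAt,
      hwt.self_of_nhds]
    ring
  rw [eulerDiffOp, hθθ, hθ.eq_of_nhds, eulerDiffOp]
  ring

lemma eulerDiffOp_comp (hφ : AnalyticAt 𝕜 φ x) (hs : AnalyticAt 𝕜 s x)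
    (hf : AnalyticAt 𝕜 f (φ x)) (hφs : ∀ᶠ y in 𝓝 x, eulerOp φ y = s y * φ y) :
    eulerDiffOp A B C (fun y ↦ f (φ y)) x = A x * s x ^ 2 * eulerOp (eulerOp f) (φ x) +
      (A x * eulerOp s x + B x * s x) * eulerOp f (φ x) + C x * f (φ x) := by
  have hθ : eulerOp (fun y ↦ f (φ y)) =ᶠ[𝓝 x] fun y ↦ s y * eulerOp f (φ y) := by
    filter_upwards [hφ.eventually_analyticAt, hφs,
      hφ.continuousAt.eventually hf.eventually_analyticAt] with y hφy hφsy hfy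
    exact eulerOp_comp hfy.differentiableAt hφy.differentiableAt hφsy
  have hθf : AnalyticAt 𝕜 (eulerOp f) (φ x) := analyticAt_eulerOp hf
  have hθθ : eulerOp (eulerOp fun y ↦ f (φ y)) x =
      eulerOp s x * eulerOp f (φ x) + s x * (s x * eulerOp (eulerOp f) (φ x)) := by
    rw [(eventuallyEq_eulerOp hθ).eq_of_nhds,
      eulerOp_mul hs.differentiableAt (hθf.fun_comp hφ).differentiableAt,
      eulerOp_comp hθf.differentiableAt hφ.differentiableAt hφs.self_of_nhds]
  rw [eulerDiffOp, hθθ, hθ.eq_of_nhds]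
  ring

lemma continuousAt_eulerDiffOp (hA : ContinuousAt A x) (hB : ContinuousAt B x)
    (hC : ContinuousAt C x) (hf : AnalyticAt 𝕜 f x) : ContinuousAt (eulerDiffOp A B C f) x := by
  have hθ := analyticAt_eulerOp hf
  exact ((hA.mul (analyticAt_eulerOp hθ).continuousAt).add (hB.mul hθ.continuousAt)).add
    (hC.mul hf.continuousAt)

lemma eventually_eq_zero_of_eulerDiffOp_eq_zero (hA : ContinuousAt A 0) (hB : ContinuousAt B 0)
    (hC : ContinuousAt C 0) (hind : ∀ n : ℕ, n ≠ 0 → (n : 𝕜) ^ 2 * A 0 + n * B 0 + C 0 ≠ 0)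
    (hf : AnalyticAt 𝕜 f 0) (hf0 : f 0 = 0) (hode : ∀ᶠ x in 𝓝 0, eulerDiffOp A B C f x = 0) :
    ∀ᶠ x in 𝓝 0, f x = 0 := by
  by_contra hne
  obtain ⟨n, g, hg, hg0, hfg⟩ := hf.exists_eventuallyEq_pow_smul_nonzero_iff.2 hne
  replace hfg : ∀ᶠ x in 𝓝 0, f x = x ^ n * g x := by simpa using hfg
  have hn : n ≠ 0 := by
    rintro rfl
    exact hg0 (by simpa [hf0] using hfg.self_of_nhds.symm)
  let L := eulerDiffOp A (fun x ↦ 2 * n * A x + B x)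
    (fun x ↦ (n ^ 2 + eulerOp (fun _ ↦ (n : 𝕜)) x) * A x + n * B x + C x) g
  have hL : ∀ᶠ x in 𝓝[≠] 0, L x = 0 := by
    filter_upwards [self_mem_nhdsWithin, hode.filter_mono nhdsWithin_le_nhds,
      hfg.eventually_nhds.filter_mono nhdsWithin_le_nhds,
      hg.eventually_analyticAt.filter_mono nhdsWithin_le_nhds] with x hx hodex hfgx hgx
    rw [eulerDiffOp_congr hfgx, eulerDiffOp_mul (by fun_prop) analyticAt_const hgx
      (.of_forall (eulerOp_pow n))] at hodex
    exact (mul_eq_zero.1 hodex).resolve_left (pow_ne_zero n hx)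
  have hLcont : ContinuousAt L 0 := by
    refine continuousAt_eulerDiffOp hA (by fun_prop) ?_ hg
    simp only [eulerOp_const]
    fun_prop
  have hL0 : L 0 = 0 :=
    ((hLcont.eventuallyEq_nhds_iff_eventuallyEq_nhdsNE continuousAt_const).1 hL).self_of_nhds
  simp only [L, eulerDiffOp, eulerOp_apply_zero, mul_zero, zero_add, add_zero] at hL0
  exact hind n hn ((mul_eq_zero.1 hL0).resolve_right hg0)

lemma eventuallyEq_of_eulerDiffOp_eq_zero (hA : ContinuousAt A 0) (hB : ContinuousAt B 0)
    (hC : ContinuousAt C 0) (hind : ∀ n : ℕ, n ≠ 0 → (n : 𝕜) ^ 2 * A 0 + n * B 0 + C 0 ≠ 0)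
    (hf : AnalyticAt 𝕜 f 0) (hg : AnalyticAt 𝕜 g 0) (hfg : f 0 = g 0)
    (hodef : ∀ᶠ x in 𝓝 0, eulerDiffOp A B C f x = 0)
    (hodeg : ∀ᶠ x in 𝓝 0, eulerDiffOp A B C g x = 0) : f =ᶠ[𝓝 0] g := by
  have hsub := eventually_eq_zero_of_eulerDiffOp_eq_zero hA hB hC hind (hf.fun_sub hg)
    (sub_eq_zero.2 hfg) <| by
      filter_upwards [hf.eventually_analyticAt, hg.eventually_analyticAt, hodef, hodeg]
        with x hfx hgx hodefx hodegx
      rw [eulerDiffOp_sub hfx hgx, hodefx, hodegx, sub_zero]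
  exact hsub.mono fun x hx ↦ sub_eq_zero.1 hx

end EulerOperator

section PowerSeries

variable {𝕜 : Type*} [NontriviallyNormedField 𝕜] {f : 𝕜 → 𝕜}
  {p : FormalMultilinearSeries 𝕜 𝕜 𝕜} {r : ENNReal}

/-- The power series of `θ f` for `f` with power series `p` at `0`. -/
noncomputable def eulerSeries (p : FormalMultilinearSeries 𝕜 𝕜 𝕜) :
    FormalMultilinearSeries 𝕜 𝕜 𝕜 :=
  p.derivSeries.unshift 0

lemma coeff_eulerSeries (p : FormalMultilinearSeries 𝕜 𝕜 𝕜) (n : ℕ) :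
    (eulerSeries p).coeff n = n * p.coeff n := by
  cases n with
  | zero =>
    rw [Nat.cast_zero, zero_mul]
    rfl
  | succ n =>
    have := p.derivSeries_coeff_one n
    rw [nsmul_eq_mul] at this
    exact_mod_cast this

lemma hasFPowerSeriesOnBall_eulerOp [CompleteSpace 𝕜] (hf : HasFPowerSeriesOnBall f p 0 r) :
    HasFPowerSeriesOnBall (eulerOp f) (eulerSeries p) 0 r := by
  have hθ : eulerOp f = fun x ↦ 0 + fderiv 𝕜 f x (x - 0) := by
    ext x
    simp [eulerOp]
  rw [hθ]
  exact hf.fderiv.unshift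

lemma hasSum_coeff_of_hasFPowerSeriesOnBall (hf : HasFPowerSeriesOnBall f p 0 r) {x : 𝕜}
    (hx : x ∈ Metric.eball 0 r) : HasSum (fun n ↦ p.coeff n * x ^ n) (f x) := by
  simpa [mul_comm] using hf.hasSum hx

end PowerSeries

section NormLTOne

lemma mem_eball_zero_one {E : Type*} [SeminormedAddCommGroup E] {x : E} (hx : ‖x‖ < 1) :
    x ∈ Metric.eball 0 1 := by
  simpa [enorm_eq_nnnorm, ← NNReal.coe_lt_coe] using hx

lemma norm_pow_lt_one {R : Type*} [NormedDivisionRing R] {x : R} (hx : ‖x‖ < 1) {n : ℕ}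
    (hn : n ≠ 0) : ‖x ^ n‖ < 1 := by
  rw [norm_pow]
  exact pow_lt_one₀ (norm_nonneg x) hx hn

lemma one_add_ne_zero_of_norm_lt_one {R : Type*} [NormedRing R] [NormOneClass R] {x : R}
    (hx : ‖x‖ < 1) : 1 + x ≠ 0 := fun h ↦
  hx.ne (by rw [eq_neg_of_add_eq_zero_right h, norm_neg, norm_one])

end NormLTOne

section Hypergeometric

variable {𝕜 : Type*}

/-- The hypergeometric operator `θ (θ + c - 1) - x (θ + a) (θ + b)`, expanded in powers of `θ`. -/
noncomputable def hypergeometricOp [NontriviallyNormedField 𝕜] (a b c : 𝕜) (f : 𝕜 → 𝕜) (x : 𝕜) :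
    𝕜 :=
  eulerDiffOp (fun x ↦ 1 - x) (fun x ↦ c - 1 - (a + b) * x) (fun x ↦ -(a * b * x)) f x

lemma hypergeometricOp_eq_zero_of_hasFPowerSeriesOnBall [NontriviallyNormedField 𝕜]
    [CompleteSpace 𝕜] {a b c : 𝕜} {f : 𝕜 → 𝕜} {p : FormalMultilinearSeries 𝕜 𝕜 𝕜} {r : ENNReal}
    (hf : HasFPowerSeriesOnBall f p 0 r)
    (hp : ∀ n : ℕ, (n + 1) * (c + n) * p.coeff (n + 1) = (a + n) * (b + n) * p.coeff n)
    {x : 𝕜} (hx : x ∈ Metric.eball 0 r) : hypergeometricOp a b c f x = 0 := by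
  have hθ := hasFPowerSeriesOnBall_eulerOp hf
  have h0 := hasSum_coeff_of_hasFPowerSeriesOnBall hf hx
  have h1 := hasSum_coeff_of_hasFPowerSeriesOnBall hθ hx
  have h2 := hasSum_coeff_of_hasFPowerSeriesOnBall (hasFPowerSeriesOnBall_eulerOp hθ) hx
  simp only [coeff_eulerSeries] at h1 h2
  have lhs : HasSum (fun n : ℕ ↦ n * (n + (c - 1)) * p.coeff n * x ^ n)
      (eulerOp (eulerOp f) x + (c - 1) * eulerOp f x) :=
    (h2.add (h1.mul_left (c - 1))).congr_fun fun n ↦ by ring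
  have rhs : HasSum (fun n : ℕ ↦ (a + n) * (b + n) * p.coeff n * x ^ (n + 1))
      (x * (eulerOp (eulerOp f) x + (a + b) * eulerOp f x + a * b * f x)) :=
    (((h2.add (h1.mul_left (a + b))).add (h0.mul_left (a * b))).mul_left x).congr_fun
      fun n ↦ by ring
  have lhs_shift := (hasSum_nat_add_iff' 1).2 lhs
  have key := lhs_shift.unique (rhs.congr_fun fun n ↦ by
    push_cast
    linear_combination x ^ (n + 1) * hp n)
  simp only [Finset.range_one, Finset.sum_singleton, Nat.cast_zero, zero_mul, sub_zero] at key
  rw [hypergeometricOp, eulerDiffOp]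
  linear_combination key

variable [RCLike 𝕜]

lemma one_le_radius_ordinaryHypergeometricSeries (𝔸 : Type*) [NormedDivisionRing 𝔸]
    [NormedAlgebra 𝕜 𝔸] (a b c : 𝕜) : 1 ≤ (ordinaryHypergeometricSeries 𝔸 a b c).radius := by
  by_cases h : ∀ k : ℕ, (k : 𝕜) ≠ -a ∧ (k : 𝕜) ≠ -b ∧ (k : 𝕜) ≠ -c
  · exact (ordinaryHypergeometricSeries_radius_eq_one 𝔸 a b c h).ge
  · obtain ⟨k, hk⟩ := not_forall.1 h
    have hk' : a = -(k : 𝕜) ∨ b = -(k : 𝕜) ∨ c = -(k : 𝕜) := by grind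
    rcases hk' with rfl | rfl | rfl
    · simp [ordinaryHypergeometric_radius_top_of_neg_nat₁]
    · simp [ordinaryHypergeometric_radius_top_of_neg_nat₂]
    · simp [ordinaryHypergeometric_radius_top_of_neg_nat₃]

lemma hasFPowerSeriesOnBall_ordinaryHypergeometric (a b c : 𝕜) :
    HasFPowerSeriesOnBall (₂F₁ a b c) (ordinaryHypergeometricSeries 𝕜 a b c) 0 1 := by
  have hr := one_le_radius_ordinaryHypergeometricSeries 𝕜 a b c
  exact ((ordinaryHypergeometricSeries 𝕜 a b c).hasFPowerSeriesOnBall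
    (one_pos.trans_le hr)).mono one_pos hr

lemma analyticAt_ordinaryHypergeometric (a b c : 𝕜) {x : 𝕜} (hx : ‖x‖ < 1) :
    AnalyticAt 𝕜 (₂F₁ a b c) x :=
  (hasFPowerSeriesOnBall_ordinaryHypergeometric a b c).analyticAt_of_mem
    (mem_eball_zero_one hx)

lemma ordinaryHypergeometricCoefficient_succ (a b : 𝕜) {c : 𝕜} (hc : ∀ k : ℕ, c ≠ -k) (n : ℕ) :
    (n + 1) * (c + n) * ordinaryHypergeometricCoefficient a b c (n + 1) =
      (a + n) * (b + n) * ordinaryHypergeometricCoefficient a b c n := by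
  have hcn : c + n ≠ 0 := fun h ↦ hc n (eq_neg_of_add_eq_zero_left h)
  have hn : (n : 𝕜) + 1 ≠ 0 := n.cast_add_one_ne_zero
  simp only [ordinaryHypergeometricCoefficient, ascPochhammer_succ_eval, Nat.factorial_succ,
    Nat.cast_mul, Nat.cast_add, Nat.cast_one, mul_inv]
  field_simp

lemma hypergeometricOp_ordinaryHypergeometric (a b : 𝕜) {c x : 𝕜} (hc : ∀ k : ℕ, c ≠ -k)
    (hx : ‖x‖ < 1) : hypergeometricOp a b c (₂F₁ a b c) x = 0 := by
  refine hypergeometricOp_eq_zero_of_hasFPowerSeriesOnBall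
    (hasFPowerSeriesOnBall_ordinaryHypergeometric a b c) (fun n ↦ ?_) (mem_eball_zero_one hx)
  simpa only [ordinaryHypergeometricSeries, FormalMultilinearSeries.coeff_ofScalars] using
    ordinaryHypergeometricCoefficient_succ a b hc n

end Hypergeometric

section QuadraticTransformation

variable {𝕜 : Type*} [NontriviallyNormedField 𝕜]

/-- The operator annihilating both sides of the quadratic transformation, as functions of `x`, once
they have been divided by `(1 + x) ^ (2 * a)`. -/
noncomputable def quadraticOp (a b : 𝕜) (f : 𝕜 → 𝕜) (x : 𝕜) : 𝕜 :=
  eulerDiffOp (fun x ↦ 1 - x ^ 2) (fun x ↦ 2 * b - 1 - (4 * a - 2 * b + 1) * x ^ 2)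
    (fun x ↦ -(2 * a * (2 * a - 2 * b + 1) * x ^ 2)) f x

lemma eulerOp_four_mul_div_one_add_sq {x : 𝕜} (hx : 1 + x ≠ 0) :
    eulerOp (fun y ↦ 4 * y / (1 + y) ^ 2) x = (1 - x) / (1 + x) * (4 * x / (1 + x) ^ 2) := by
  have h := ((hasDerivAt_id' x).const_mul 4).fun_div (((hasDerivAt_id' x).const_add 1).fun_pow 2)
    (pow_ne_zero 2 hx)
  rw [eulerOp_eq_of_hasDerivAt h]
  field_simp
  ring

lemma eulerOp_one_sub_div_one_add {x : 𝕜} (hx : 1 + x ≠ 0) :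
    eulerOp (fun y ↦ (1 - y) / (1 + y)) x = -2 * x / (1 + x) ^ 2 := by
  have h := ((hasDerivAt_id' x).const_sub 1).fun_div ((hasDerivAt_id' x).const_add 1) hx
  rw [eulerOp_eq_of_hasDerivAt h]
  field_simp
  ring

lemma eulerOp_mul_div_one_add (c : 𝕜) {x : 𝕜} (hx : 1 + x ≠ 0) :
    eulerOp (fun y ↦ c * y / (1 + y)) x = c * x / (1 + x) ^ 2 := by
  have h := ((hasDerivAt_id' x).const_mul c).fun_div ((hasDerivAt_id' x).const_add 1) hx
  rw [eulerOp_eq_of_hasDerivAt h]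
  field_simp
  ring

lemma eventually_one_add_ne_zero {x : 𝕜} (hx : 1 + x ≠ 0) : ∀ᶠ y in 𝓝 x, 1 + y ≠ 0 :=
  (continuousAt_const.add continuousAt_id).eventually_ne hx

variable [CompleteSpace 𝕜] {f : 𝕜 → 𝕜}

lemma quadraticOp_comp_sq [NeZero (2 : 𝕜)] (a b : 𝕜) {x : 𝕜} (hf : AnalyticAt 𝕜 f (x ^ 2)) :
    quadraticOp a b (fun y ↦ f (y ^ 2)) x =
      4 * hypergeometricOp a (a - b + 1 / 2) (b + 1 / 2) f (x ^ 2) := by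
  have h2 : (2 : 𝕜) ≠ 0 := two_ne_zero
  rw [quadraticOp, eulerDiffOp_comp (φ := fun y ↦ y ^ 2) (s := fun _ ↦ 2) (by fun_prop)
    analyticAt_const hf (.of_forall (eulerOp_pow 2)), eulerOp_const, hypergeometricOp, eulerDiffOp]
  field_simp
  ring

lemma quadraticOp_mul_comp (a b : 𝕜) {w : 𝕜 → 𝕜} {x : 𝕜} (hx : 1 + x ≠ 0)
    (hw : AnalyticAt 𝕜 w x) (hθw : ∀ᶠ y in 𝓝 x, eulerOp w y = -2 * a * y / (1 + y) * w y)
    (hf : AnalyticAt 𝕜 f (4 * x / (1 + x) ^ 2)) :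
    quadraticOp a b (fun y ↦ w y * f (4 * y / (1 + y) ^ 2)) x =
      (1 - x ^ 2) * w x * hypergeometricOp a b (2 * b) f (4 * x / (1 + x) ^ 2) := by
  have hx2 : (1 + x) ^ 2 ≠ 0 := pow_ne_zero 2 hx
  have hφ : AnalyticAt 𝕜 (fun y ↦ 4 * y / (1 + y) ^ 2) x := by fun_prop (disch := assumption)
  have hfφ : AnalyticAt 𝕜 (fun y ↦ f (4 * y / (1 + y) ^ 2)) x := AnalyticAt.fun_comp hf hφ
  rw [quadraticOp, eulerDiffOp_mul (t := fun y ↦ -2 * a * y / (1 + y)) hw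
      (by fun_prop (disch := assumption)) hfφ hθw,
    eulerDiffOp_comp (φ := fun y ↦ 4 * y / (1 + y) ^ 2) (s := fun y ↦ (1 - y) / (1 + y)) hφ
      (by fun_prop (disch := assumption)) hf
      ((eventually_one_add_ne_zero hx).mono fun y hy ↦ eulerOp_four_mul_div_one_add_sq hy),
    eulerOp_mul_div_one_add _ hx, eulerOp_one_sub_div_one_add hx, hypergeometricOp, eulerDiffOp]
  field_simp
  ring

lemma eqOn_of_quadraticOp_eq_zero [CharZero 𝕜] {a b : 𝕜} {g : 𝕜 → 𝕜} {U : Set 𝕜}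
    (hb : ∀ k : ℕ, 2 * b ≠ -k) (hU : IsPreconnected U) (hU0 : U ∈ 𝓝 0) (hf : AnalyticOnNhd 𝕜 f U)
    (hg : AnalyticOnNhd 𝕜 g U) (hfg : f 0 = g 0) (hodef : ∀ x ∈ U, quadraticOp a b f x = 0)
    (hodeg : ∀ x ∈ U, quadraticOp a b g x = 0) : Set.EqOn f g U := by
  have hind (n : ℕ) (hn : n ≠ 0) : (n : 𝕜) ^ 2 * (1 - 0 ^ 2) + n *
      (2 * b - 1 - (4 * a - 2 * b + 1) * 0 ^ 2) + -(2 * a * (2 * a - 2 * b + 1) * 0 ^ 2) ≠ 0 := by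
    obtain ⟨m, rfl⟩ := Nat.exists_eq_succ_of_ne_zero hn
    have hm : 2 * b + m ≠ 0 := fun h ↦ hb m (eq_neg_of_add_eq_zero_left h)
    convert mul_ne_zero (Nat.cast_ne_zero (R := 𝕜).2 hn) hm using 1
    push_cast
    ring
  have h0 : 0 ∈ U := mem_of_mem_nhds hU0
  exact hf.eqOn_of_preconnected_of_eventuallyEq hg hU h0 <|
    eventuallyEq_of_eulerDiffOp_eq_zero (by fun_prop) (by fun_prop) (by fun_prop) hind
      (hf 0 h0) (hg 0 h0) hfg (Filter.mem_of_superset hU0 hodef)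
      (Filter.mem_of_superset hU0 hodeg)

end QuadraticTransformation

section SquareArgument

variable {𝕜 : Type*} [RCLike 𝕜]

lemma analyticAt_ordinaryHypergeometric_sq (a b c : 𝕜) {x : 𝕜} (hx : ‖x‖ < 1) :
    AnalyticAt 𝕜 (fun y ↦ ₂F₁ a b c (y ^ 2)) x :=
  AnalyticAt.fun_comp (analyticAt_ordinaryHypergeometric a b c (norm_pow_lt_one hx two_ne_zero))
    (by fun_prop)

lemma quadraticOp_ordinaryHypergeometric_sq (a : 𝕜) {b x : 𝕜}
    (hb : ∀ k : ℕ, 2 * b ≠ -k) (hx : ‖x‖ < 1) :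
    quadraticOp a b (fun y ↦ ₂F₁ a (a - b + 1 / 2) (b + 1 / 2) (y ^ 2)) x = 0 := by
  have hc (k : ℕ) : b + 1 / 2 ≠ -k := fun h ↦ hb (2 * k + 1) <| by
    push_cast
    linear_combination 2 * h
  have hx2 : ‖x ^ 2‖ < 1 := norm_pow_lt_one hx two_ne_zero
  rw [quadraticOp_comp_sq a b (analyticAt_ordinaryHypergeometric _ _ _ hx2),
    hypergeometricOp_ordinaryHypergeometric _ _ hc hx2, mul_zero]

end SquareArgument

section QuadraticDomain

/-- The domain of validity of the quadratic transformation over `ℂ`. -/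
def quadraticDomain : Set ℂ := {x | ‖x‖ < 1 ∧ ‖4 * x / (1 + x) ^ 2‖ < 1}

variable {x : ℂ}

lemma norm_four_mul_div_one_add_sq_lt_one_iff (hx : 1 + x ≠ 0) :
    ‖4 * x / (1 + x) ^ 2‖ < 1 ↔ 4 * ‖x‖ < 1 + 2 * x.re + ‖x‖ ^ 2 := by
  have hsq : ‖1 + x‖ ^ 2 = 1 + 2 * x.re + ‖x‖ ^ 2 := by
    simp only [Complex.sq_norm, Complex.normSq_apply, Complex.add_re, Complex.add_im,
      Complex.one_re, Complex.one_im]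
    ring
  have hpos : 0 < ‖1 + x‖ ^ 2 := pow_pos (norm_pos_iff.2 hx) 2
  rw [norm_div, norm_mul, norm_pow, Complex.norm_ofNat, div_lt_one hpos, hsq]

lemma quadraticDomain_eq :
    quadraticDomain = {x | ‖x‖ < 1 ∧ 4 * ‖x‖ < 1 + 2 * x.re + ‖x‖ ^ 2} := by
  ext x
  exact and_congr_right fun hx ↦
    norm_four_mul_div_one_add_sq_lt_one_iff (one_add_ne_zero_of_norm_lt_one hx)

lemma isOpen_quadraticDomain : IsOpen quadraticDomain := by
  rw [quadraticDomain_eq]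
  have hball : IsOpen {x : ℂ | ‖x‖ < 1} := isOpen_lt (by fun_prop) (by fun_prop)
  have hineq : IsOpen {x : ℂ | 4 * ‖x‖ < 1 + 2 * x.re + ‖x‖ ^ 2} :=
    isOpen_lt (by fun_prop) <|
      (continuous_const.add (Complex.continuous_re.const_mul 2)).add (continuous_norm.pow 2)
  exact hball.inter hineq

lemma zero_mem_quadraticDomain : (0 : ℂ) ∈ quadraticDomain := by
  simp [quadraticDomain]

lemma starConvex_quadraticDomain : StarConvex ℝ 0 quadraticDomain := by
  rw [quadraticDomain_eq, starConvex_zero_iff]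
  rintro x ⟨hx1, hx2⟩ t ht0 ht1
  have hnorm : ‖t • x‖ = t * ‖x‖ := by rw [norm_smul, Real.norm_of_nonneg ht0]
  have hsq : t * ‖x‖ ^ 2 ≤ 1 :=
    mul_le_one₀ ht1 (by positivity) (pow_le_one₀ (norm_nonneg x) hx1.le)
  have split : 1 + 2 * (t * x.re) + (t * ‖x‖) ^ 2 - 4 * (t * ‖x‖) =
      t * (1 + 2 * x.re + ‖x‖ ^ 2 - 4 * ‖x‖) + (1 - t) * (1 - t * ‖x‖ ^ 2) := by ring
  simp only [Set.mem_ofPred_eq, hnorm, Complex.smul_re, smul_eq_mul]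
  refine ⟨(mul_le_of_le_one_left (norm_nonneg x) ht1).trans_lt hx1, ?_⟩
  rcases ht0.eq_or_lt with rfl | ht
  · norm_num
  · rw [← sub_pos, split]
    exact add_pos_of_pos_of_nonneg (mul_pos ht (sub_pos.2 hx2))
      (mul_nonneg (sub_nonneg.2 ht1) (sub_nonneg.2 hsq))

lemma isPreconnected_quadraticDomain : IsPreconnected quadraticDomain :=
  (starConvex_quadraticDomain.isPathConnected zero_mem_quadraticDomain).isConnected.isPreconnected

end QuadraticDomain

section TransformedSide

variable {x : ℂ}

lemma analyticAt_one_add_cpow (c : ℂ) (hx : ‖x‖ < 1) :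
    AnalyticAt ℂ (fun y ↦ (1 + y) ^ c) x :=
  (analyticAt_const.fun_add analyticAt_id).cpow analyticAt_const
    (Complex.mem_slitPlane_of_norm_lt_one hx)

lemma eulerOp_one_add_cpow (c : ℂ) (hx : ‖x‖ < 1) :
    eulerOp (fun y ↦ (1 + y) ^ c) x = c * x / (1 + x) * (1 + x) ^ c := by
  have h := ((hasDerivAt_id' x).const_add 1).cpow_const (c := c)
    (Complex.mem_slitPlane_of_norm_lt_one hx)
  rw [eulerOp_eq_of_hasDerivAt h, Complex.cpow_sub _ _ (one_add_ne_zero_of_norm_lt_one hx),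
    Complex.cpow_one]
  ring

lemma analyticAt_cpow_mul_ordinaryHypergeometric_comp (a b c d : ℂ) (hx : x ∈ quadraticDomain) :
    AnalyticAt ℂ (fun y ↦ (1 + y) ^ d * ₂F₁ a b c (4 * y / (1 + y) ^ 2)) x := by
  have hx2 : (1 + x) ^ 2 ≠ 0 := pow_ne_zero 2 (one_add_ne_zero_of_norm_lt_one hx.1)
  have hφ : AnalyticAt ℂ (fun y : ℂ ↦ 4 * y / (1 + y) ^ 2) x := by fun_prop (disch := assumption)
  exact (analyticAt_one_add_cpow d hx.1).fun_mul
    (AnalyticAt.fun_comp (analyticAt_ordinaryHypergeometric a b c hx.2) hφ)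

lemma quadraticOp_cpow_mul_ordinaryHypergeometric_comp (a : ℂ) {b : ℂ}
    (hb : ∀ k : ℕ, 2 * b ≠ -k) (hx : x ∈ quadraticDomain) :
    quadraticOp a b
      (fun y ↦ (1 + y) ^ (-2 * a) * ₂F₁ a b (2 * b) (4 * y / (1 + y) ^ 2)) x = 0 := by
  rw [quadraticOp_mul_comp a b (one_add_ne_zero_of_norm_lt_one hx.1)
    (analyticAt_one_add_cpow _ hx.1) ?_ (analyticAt_ordinaryHypergeometric _ _ _ hx.2),
    hypergeometricOp_ordinaryHypergeometric a b hb hx.2, mul_zero]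
  filter_upwards [isOpen_quadraticDomain.mem_nhds hx] with y hy
  exact eulerOp_one_add_cpow _ hy.1

end TransformedSide

lemma ofReal_hyp (a b c x : ℝ) : (hyp a b c x : ℂ) = ₂F₁ (a : ℂ) (b : ℂ) (c : ℂ) (x : ℂ) := by
  have heval (k : ℕ) (y : ℝ) :
      (ascPochhammer ℂ k).eval (y : ℂ) = ((ascPochhammer ℝ k).eval y : ℝ) := by
    rw [← ascPochhammer_map Complex.ofRealHom, ← Complex.ofRealHom_eq_coe,
      Polynomial.eval_map_apply]
    rfl
  simp only [hyp, ordinaryHypergeometric_eq_tsum, Complex.ofReal_tsum, smul_eq_mul, heval]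
  refine tsum_congr fun k ↦ ?_
  push_cast
  field_simp

theorem hyp_quadratic_transform_general (a b x : ℂ) (hb : ∀ k : ℕ, 2 * b ≠ -(k : ℂ))
    (hx : ‖x‖ < 1) (hx' : ‖4 * x / (1 + x) ^ 2‖ < 1) :
    ₂F₁ a b (2 * b) (4 * x / (1 + x) ^ 2) =
      (1 + x) ^ (2 * a) * ₂F₁ a (a - b + 1 / 2) (b + 1 / 2) (x ^ 2) := by
  have heq : (1 + x) ^ (-2 * a) * ₂F₁ a b (2 * b) (4 * x / (1 + x) ^ 2) =
      ₂F₁ a (a - b + 1 / 2) (b + 1 / 2) (x ^ 2) :=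
    eqOn_of_quadraticOp_eq_zero hb isPreconnected_quadraticDomain
      (isOpen_quadraticDomain.mem_nhds zero_mem_quadraticDomain)
      (fun y ↦ analyticAt_cpow_mul_ordinaryHypergeometric_comp a b (2 * b) (-2 * a))
      (fun y hy ↦ analyticAt_ordinaryHypergeometric_sq _ _ _ hy.1) (by simp)
      (fun y ↦ quadraticOp_cpow_mul_ordinaryHypergeometric_comp a hb)
      (fun y hy ↦ quadraticOp_ordinaryHypergeometric_sq a hb hy.1) ⟨hx, hx'⟩
  have hpow : (1 + x) ^ (2 * a) * (1 + x) ^ (-2 * a) = 1 := by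
    rw [← Complex.cpow_add _ _ (one_add_ne_zero_of_norm_lt_one hx), neg_mul, add_neg_cancel,
      Complex.cpow_zero]
  rw [← heq, ← mul_assoc, hpow, one_mul]

theorem hyp_quadratic_transform (a b x : ℝ) (hb : ∀ k : ℕ, 2 * b ≠ -(k : ℝ))
    (hx : |x| < 1) (hx' : |4 * x / (1 + x) ^ 2| < 1) :
    hyp a b (2 * b) (4 * x / (1 + x) ^ 2) =
      (1 + x) ^ (2 * a) * hyp a (a - b + 1 / 2) (b + 1 / 2) (x ^ 2) := by
  have h1 : 0 ≤ 1 + x := by linarith [(abs_lt.1 hx).1]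
  rw [← Complex.ofReal_inj]
  push_cast [ofReal_hyp, Complex.ofReal_cpow h1]
  exact hyp_quadratic_transform_general a b x (by exact_mod_cast hb) (by exact_mod_cast hx)
    (by exact_mod_cast hx')
end
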